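/- If a finite ULD lattice L belongs to L(CFG), i.e. L is order-isomorphic to the configuration space of some chip firing game reaching a unique fixed point, then for every meet-irreducible m of L the system E(m) has a non-negative integer solution. -/

import Mathlib

open Classical

section CFGdefs

variable {V : Type*}

/-- Out-degree of a vertex in a directed multigraph with edge multiplicities `E`. -/
noncomputable def outDeg (E : V → V → ℕ) (v : V) : ℕ := ∑ᶠ u, E v u

/-- A vertex is a sink if all its outgoing edges are loops. -/
def IsSink (E : V → V → ℕ) (v : V) : Prop := outDeg E v = E v v

/-- A vertex is firable in configuration `c`. -/
def Firable (E : V → V → ℕ) (c : V → ℕ) (v : V) : Prop :=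
  ¬ IsSink E v ∧ outDeg E v ≤ c v

/-- The result of firing vertex `v` in configuration `c`. -/
noncomputable def fire (E : V → V → ℕ) (c : V → ℕ) (v : V) : V → ℕ :=
  fun u => if u = v then c v - outDeg E v + E v v else c u + E v u

/-- The configuration obtained by firing a list of vertices in order. -/
noncomputable def fireList (E : V → V → ℕ) : (V → ℕ) → List V → (V → ℕ)
  | c, [] => c
  | c, v :: l => fireList E (fire E c v) l

/-- A list of vertices is a valid firing sequence from `c`. -/
def ValidSeq (E : V → V → ℕ) : (V → ℕ) → List V → Prop
  | _, [] => True
  | c, v :: l => Firable E c v ∧ ValidSeq E (fire E c v) l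

/-- `c'` is reachable from `c` by a finite sequence of firings. -/
def Reaches (E : V → V → ℕ) (c c' : V → ℕ) : Prop :=
  ∃ l : List V, ValidSeq E c l ∧ fireList E c l = c'

/-- A configuration with no firable vertex. -/
def FixedPt (E : V → V → ℕ) (c : V → ℕ) : Prop := ∀ v, ¬ Firable E c v

/-- The chip firing game `CFG(G,O)` reaches a unique fixed point. -/
def ReachesUFP (E : V → V → ℕ) (O : V → ℕ) : Prop :=
  ∃ fp : V → ℕ, Reaches E O fp ∧ FixedPt E fp ∧ ∀ c, Reaches E O c → Reaches E c fp

/-- The game is simple: in every firing sequence from `O` to the fixed point,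
each vertex fires at most once. -/
def SimpleCFG (E : V → V → ℕ) (O : V → ℕ) : Prop :=
  ∀ l : List V, ValidSeq E O l → FixedPt E (fireList E O l) → l.Nodup

/-- Single firing step from `c` to `c'` by firing vertex `v`. -/
def FireStep (E : V → V → ℕ) (c : V → ℕ) (v : V) (c' : V → ℕ) : Prop :=
  Firable E c v ∧ fire E c v = c'

/-- The partial order `L` is order-isomorphic to the configuration space of
`CFG(G,O)` ordered by reachability. -/
def Generates (E : V → V → ℕ) (O : V → ℕ) (L : Type*) [PartialOrder L] : Prop :=
  ∃ f : L ≃ {c : V → ℕ // Reaches E O c},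
    ∀ a b : L, a ≤ b ↔ Reaches E (f a).val (f b).val

/-- The support graph is connected (as an undirected graph). -/
def ConnectedG (E : V → V → ℕ) : Prop :=
  ∀ u v : V, Relation.ReflTransGen (fun a b => 0 < E a b ∨ 0 < E b a) u v

/-- The support graph together with its initial data is an Abelian Sandpile Model. -/
def IsASM (E : V → V → ℕ) : Prop :=
  ConnectedG E ∧ ∃ s : V, IsSink E s ∧ (∀ v, IsSink E v → v = s) ∧
    ∀ v₁ v₂ : V, v₁ ≠ v₂ → v₁ ≠ s → v₂ ≠ s → E v₁ v₂ = E v₂ v₁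

/-- The directed multigraph has no directed cycle. -/
def AcyclicG (E : V → V → ℕ) : Prop :=
  ∀ v : V, ¬ Relation.TransGen (fun a b => 0 < E a b) v v

end CFGdefs

/-- `L` is generated by some chip firing game reaching a unique fixed point. -/
def MemLCFG (L : Type*) [PartialOrder L] : Prop :=
  ∃ (V : Type) (_ : Finite V) (E : V → V → ℕ) (O : V → ℕ),
    ReachesUFP E O ∧ Generates E O L

/-- `L` is generated by some Abelian Sandpile Model reaching a unique fixed point. -/
def MemLASM (L : Type*) [PartialOrder L] : Prop :=
  ∃ (V : Type) (_ : Finite V) (E : V → V → ℕ) (O : V → ℕ),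
    IsASM E ∧ ReachesUFP E O ∧ Generates E O L

section Latticedefs

variable {L : Type*} [Lattice L]

/-- `m` is meet-irreducible: it has exactly one upper cover. -/
def MeetIrred (m : L) : Prop := ∃! y, m ⋖ y

/-- `j` is join-irreducible: it has exactly one lower cover. -/
def JoinIrred (j : L) : Prop := ∃! y, y ⋖ j

/-- The set `M_x \ M_y` of meet-irreducibles above `x` but not above `y`. -/
def MsetDiff (x y : L) : Set L := {m | MeetIrred m ∧ x ≤ m ∧ ¬ y ≤ m}

/-- The set `M \ M_a` of meet-irreducibles not above `a`. -/
def MnotAbove (a : L) : Set L := {m | MeetIrred m ∧ ¬ a ≤ m}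

/-- `x⁺`: the join of all upper covers of `x`. -/
noncomputable def uplus [Fintype L] [OrderBot L] (x : L) : L :=
  Finset.univ.sup (fun y => if x ⋖ y then y else ⊥)

/-- `L` is upper locally distributive: for every `x ≠ ⊤` the interval `[x, x⁺]`
is isomorphic to a Boolean lattice (a hypercube). -/
def IsULD (L : Type*) [Lattice L] [Fintype L] [BoundedOrder L] : Prop :=
  ∀ x : L, x ≠ ⊤ → ∃ n : ℕ, Nonempty (↥(Set.Icc x (uplus x)) ≃o Set (Fin n))

/-- `𝔘_m`: the minimal elements of `{x : ∃ y, x ⋖ y and 𝔪(x,y) = m}`. -/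
def Uset (m : L) : Set L :=
  {x | Minimal (fun z => ∃ y, z ⋖ y ∧ MsetDiff z y = {m}) x}

/-- `𝔏_m`: the maximal elements of `{x : a ≰ x for every a ∈ 𝔘_m}`. -/
def Lset (m : L) : Set L :=
  {x | Maximal (fun z => ∀ a ∈ Uset m, ¬ a ≤ z) x}

/-- `(w, e)` is a (non-negative integer) solution of the system `E(m)`. -/
def SolvesE [OrderBot L] (m : L) (w : ℕ) (e : L → ℕ) : Prop :=
  (Uset m = {(⊥ : L)} → 1 ≤ w) ∧
  (Uset m ≠ {(⊥ : L)} →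
    (∀ a ∈ Lset m, (∑ᶠ x ∈ MnotAbove a, e x) < w) ∧
    (∀ a ∈ Uset m, w ≤ ∑ᶠ x ∈ MnotAbove a, e x))

/-- The system `E(m)` has a non-negative integer solution. -/
def HasSolE [OrderBot L] (m : L) : Prop := ∃ w e, SolvesE m w e

/-- The variable `e_{x,m}` occurs in the system `𝔈(m)`. -/
def VarOccurs [OrderBot L] (x m : L) : Prop :=
  MeetIrred m ∧ Uset m ≠ {(⊥ : L)} ∧ ∃ a ∈ Uset m ∪ Lset m, x ∈ MnotAbove a

/-- `(W, Ee)` is a non-negative integer solution of the system `Ω`. -/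
def SolvesOmega [OrderBot L] (W : L → ℕ) (Ee : L → L → ℕ) : Prop :=
  (∀ m : L, MeetIrred m → SolvesE m (W m) (fun x => Ee x m)) ∧
  (∀ m₁ m₂ : L, m₁ ≠ m₂ → VarOccurs m₁ m₂ → VarOccurs m₂ m₁ → Ee m₁ m₂ = Ee m₂ m₁)

/-- The edge relation of the directed graph `𝒢` on the meet-irreducibles. -/
def Gedge (m₁ m₂ : L) : Prop :=
  MeetIrred m₁ ∧ MeetIrred m₂ ∧ ∃ a ∈ Uset m₂, m₁ ∈ MnotAbove a

end Latticedefs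

/-- The system `Ω` has a non-negative integer solution. -/
def HasSolOmega (L : Type*) [Lattice L] [OrderBot L] : Prop :=
  ∃ W Ee, SolvesOmega (L := L) W Ee

/-- The directed graph `𝒢` on the meet-irreducibles is acyclic. -/
def GAcyclic (L : Type*) [Lattice L] : Prop :=
  ∀ m : L, ¬ Relation.TransGen (Gedge (L := L)) m m

/-!
In a game reaching a unique fixed point, a reachable configuration determines how often each vertex
has fired. These shot vectors embed `L` into `V → ℕ`, and their set is closed under joins and
augmentable one firing at a time. A meet-irreducible `m` then stands for one event, namely the
`(k + 1)`-st firing of a vertex `v`: the covers labelled by `m` are exactly the firings of `v`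
preceded by `k` others. Whether that event is possible at `a`, where `v` has fired `k` times, is a
threshold condition on the number of chips `v` has received, which is linear in the shot vector of
`a`. Since the shot vector of `a` counts the meet-irreducibles not above `a` by vertex, this
inequality is the system `E(m)` up to a correction excluding those `a` where `v` has fired fewer
than `k` times.
-/

section IndexTuples

variable {ι : Type*} {x z : ι → ℕ} {i : ι}

theorem add_single_one_le_iff (h : x ≤ z) : x + Pi.single i 1 ≤ z ↔ x i < z i := by
  refine ⟨fun hle => by simpa using hle i, fun hlt j => ?_⟩
  obtain rfl | hj := eq_or_ne j i
  · simpa using hlt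
  · simpa [hj] using h j

theorem sup_add_single_one (h : x ≤ z) (hi : z i = x i) :
    z ⊔ (x + Pi.single i 1) = z + Pi.single i 1 := by
  ext j
  obtain rfl | hj := eq_or_ne j i
  · simp [hi]
  · simpa [hj] using h j

theorem covBy_add_single_one (x : ι → ℕ) (i : ι) : x ⋖ x + Pi.single i 1 :=
  Pi.covBy_iff.2 ⟨i, by simp, fun j hj => by simp [hj]⟩

end IndexTuples

/-- An antimatroid with repetition, given by its feasible multisets, which are encoded as
multiplicity functions. It captures the combinatorics of chip firing independently of the chips. -/
structure IsRepetitionAntimatroid {ι : Type*} (S : Set (ι → ℕ)) : Prop where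
  zero_mem : 0 ∈ S
  supClosed : SupClosed S
  exists_add_single_le : ∀ x ∈ S, ∀ y ∈ S, x < y →
    ∃ i, x + Pi.single i 1 ∈ S ∧ x + Pi.single i 1 ≤ y

section OrderEmbedding

variable {ι L : Type*} {i j : ι}

theorem covBy_of_map_eq_add_single [PartialOrder L] {s : L ↪o (ι → ℕ)} {a b : L}
    (hb : s b = s a + Pi.single i 1) : a ⋖ b :=
  .of_image s (hb ▸ covBy_add_single_one _ _)

theorem le_iff_apply_lt_of_map_eq_add_single [PartialOrder L] {s : L ↪o (ι → ℕ)} {a b c : L}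
    (hb : s b = s a + Pi.single i 1) (hac : a ≤ c) : b ≤ c ↔ s a i < s c i := by
  rw [← s.le_iff_le, hb, add_single_one_le_iff (s.monotone hac)]

theorem not_le_of_mem_lset_of_mem_uset [Lattice L] {m a b : L} (ha : a ∈ Lset m)
    (hb : b ∈ Uset m) : ¬ b ≤ a :=
  (Set.mem_ofPred.1 ha).prop b hb

theorem MeetIrred.index_unique [Lattice L] {s : L ↪o (ι → ℕ)} {m y z : L} (hm : MeetIrred m)
    (hy : s y = s m + Pi.single i 1) (hz : s z = s m + Pi.single j 1) : i = j := by
  obtain rfl := hm.unique (covBy_of_map_eq_add_single hy) (covBy_of_map_eq_add_single hz)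
  have hsingle : (Pi.single i 1 : ι → ℕ) = Pi.single j 1 := add_left_cancel (hy.symm.trans hz)
  by_contra hij
  simpa [hij] using congrFun hsingle i

end OrderEmbedding

namespace IsRepetitionAntimatroid

variable {ι L : Type*} {i : ι}

theorem map_bot [PartialOrder L] [OrderBot L] {s : L ↪o (ι → ℕ)}
    (hs : IsRepetitionAntimatroid (Set.range s)) : s ⊥ = 0 := by
  obtain ⟨a, ha⟩ := hs.zero_mem
  exact le_antisymm (ha ▸ s.monotone bot_le) zero_le

theorem exists_map_eq_add_single_le_of_lt [PartialOrder L] {s : L ↪o (ι → ℕ)}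
    (hs : IsRepetitionAntimatroid (Set.range s)) {a b : L} (hab : a < b) :
    ∃ i c, s c = s a + Pi.single i 1 ∧ c ≤ b := by
  obtain ⟨i, ⟨c, hc⟩, hle⟩ := hs.exists_add_single_le _ ⟨a, rfl⟩ _ ⟨b, rfl⟩ (s.strictMono hab)
  exact ⟨i, c, hc, s.le_iff_le.1 (hc ▸ hle)⟩

theorem exists_map_eq_add_single_of_covBy [PartialOrder L] {s : L ↪o (ι → ℕ)}
    (hs : IsRepetitionAntimatroid (Set.range s)) {a b : L} (hab : a ⋖ b) :
    ∃ i, s b = s a + Pi.single i 1 := by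
  obtain ⟨i, c, hc, hcb⟩ := hs.exists_map_eq_add_single_le_of_lt hab.lt
  have hac := covBy_of_map_eq_add_single hc
  obtain rfl := (hab.eq_or_eq hac.le hcb).resolve_left hac.ne'
  exact ⟨i, hc⟩

theorem exists_le_apply_eq_of_apply_lt [PartialOrder L] [OrderBot L] [Finite L]
    {s : L ↪o (ι → ℕ)} (hs : IsRepetitionAntimatroid (Set.range s)) {a : L} {k : ℕ}
    (hk : k < s a i) : ∃ b ≤ a, s b i = k ∧ ∃ c, s c = s b + Pi.single i 1 := by
  obtain ⟨b, -, hb⟩ := exists_maximal_ge_of_wellFoundedGT (fun b => b ≤ a ∧ s b i ≤ k) ⊥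
    ⟨bot_le, by simp [hs.map_bot]⟩
  have hba : b < a := lt_of_le_of_ne hb.prop.1 fun h => (h ▸ hk).not_ge hb.prop.2
  obtain ⟨j, c, hc, hca⟩ := hs.exists_map_eq_add_single_le_of_lt hba
  have hck : k < s c i := by
    by_contra! hle
    exact hb.not_prop_of_gt (covBy_of_map_eq_add_single hc).lt ⟨hca, hle⟩
  have hbk := hb.prop.2
  obtain rfl | hij := eq_or_ne i j
  · have : s c i = s b i + 1 := by simp [hc]
    exact ⟨b, hba.le, by omega, c, hc⟩
  · have : s c i = s b i := by simp [hc, hij]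
    omega

variable [Lattice L] {s : L ↪o (ι → ℕ)}

theorem map_sup (hs : IsRepetitionAntimatroid (Set.range s)) (a b : L) :
    s (a ⊔ b) = s a ⊔ s b := by
  obtain ⟨c, hc⟩ := hs.supClosed ⟨a, rfl⟩ ⟨b, rfl⟩
  refine le_antisymm ?_ (sup_le (s.monotone le_sup_left) (s.monotone le_sup_right))
  rw [← hc, s.le_iff_le, sup_le_iff, ← s.le_iff_le, ← s.le_iff_le, hc]
  exact ⟨le_sup_left, le_sup_right⟩

theorem map_sup_eq_add_single (hs : IsRepetitionAntimatroid (Set.range s)) {a b c : L}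
    (hb : s b = s a + Pi.single i 1) (hac : a ≤ c) (hi : s c i = s a i) :
    s (c ⊔ b) = s c + Pi.single i 1 := by
  rw [hs.map_sup, hb, sup_add_single_one (s.monotone hac) hi]

theorem le_meetIrred_of_apply_le (hs : IsRepetitionAntimatroid (Set.range s)) {m y a : L}
    (hm : MeetIrred m) (hy : s y = s m + Pi.single i 1) (ha : s a i ≤ s m i) : a ≤ m := by
  by_contra hle
  obtain ⟨j, c, hc, hcle⟩ := hs.exists_map_eq_add_single_le_of_lt (left_lt_sup.2 hle)
  obtain rfl := hm.unique (covBy_of_map_eq_add_single hc) (covBy_of_map_eq_add_single hy)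
  have hlt := (le_iff_apply_lt_of_map_eq_add_single hy le_sup_left).1 hcle
  rw [hs.map_sup, Pi.sup_apply, sup_eq_left.2 ha] at hlt
  exact hlt.false

theorem exists_meetIrred_apply_eq [Finite L] (hs : IsRepetitionAntimatroid (Set.range s)) {a b : L}
    (hb : s b = s a + Pi.single i 1) :
    ∃ m, MeetIrred m ∧ s (m ⊔ b) = s m + Pi.single i 1 ∧ s a i = s m i := by
  obtain ⟨m, ham, hm⟩ := exists_maximal_ge_of_wellFoundedGT (fun z => a ≤ z ∧ ¬ b ≤ z) a
    ⟨le_rfl, (covBy_of_map_eq_add_single hb).lt.not_ge⟩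
  have hi : s a i = s m i := (s.monotone ham i).antisymm <| not_lt.1 <|
    (le_iff_apply_lt_of_map_eq_add_single hb ham).not.1 hm.prop.2
  have hstep := hs.map_sup_eq_add_single hb ham hi.symm
  have hcov : m ⋖ m ⊔ b := covBy_of_map_eq_add_single hstep
  refine ⟨m, ⟨m ⊔ b, hcov, fun z hz => ?_⟩, hstep, hi⟩
  have hbz : b ≤ z := by
    by_contra hbz
    exact hm.not_prop_of_gt hz.lt ⟨ham.trans hz.le, hbz⟩
  exact ((hz.eq_or_eq hcov.le (sup_le hz.le hbz)).resolve_left hcov.ne').symm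

theorem msetDiff_eq_singleton (hs : IsRepetitionAntimatroid (Set.range s)) {m y a b : L}
    (hm : MeetIrred m) (hy : s y = s m + Pi.single i 1) (hb : s b = s a + Pi.single i 1)
    (hi : s a i = s m i) : MsetDiff a b = {m} := by
  ext x
  constructor
  · rintro ⟨hx, hax, hbx⟩
    have hxi : s x i = s a i := le_antisymm
      (not_lt.1 ((le_iff_apply_lt_of_map_eq_add_single hb hax).not.1 hbx)) (s.monotone hax i)
    exact le_antisymm (hs.le_meetIrred_of_apply_le hm hy (hxi.trans hi).le)
      (hs.le_meetIrred_of_apply_le hx (hs.map_sup_eq_add_single hb hax hxi)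
        (hi.symm.trans hxi.symm).le)
  · rintro rfl
    have hax := hs.le_meetIrred_of_apply_le hm hy hi.le
    exact ⟨hm, hax, (le_iff_apply_lt_of_map_eq_add_single hb hax).not.2 hi.not_lt⟩

theorem apply_eq_and_exists_map_eq_of_mem_uset (hs : IsRepetitionAntimatroid (Set.range s))
    {m y a : L} (hm : MeetIrred m) (hy : s y = s m + Pi.single i 1) (ha : a ∈ Uset m) :
    s a i = s m i ∧ ∃ b, s b = s a + Pi.single i 1 := by
  obtain ⟨b, hab, hdiff⟩ := (Set.mem_ofPred.1 ha).prop
  obtain ⟨j, hb⟩ := hs.exists_map_eq_add_single_of_covBy hab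
  obtain ⟨-, ham, hbm⟩ : m ∈ MsetDiff a b := hdiff ▸ rfl
  have hj : s m j = s a j := le_antisymm
    (not_lt.1 ((le_iff_apply_lt_of_map_eq_add_single hb ham).not.1 hbm)) (s.monotone ham j)
  obtain rfl := hm.index_unique hy (hs.map_sup_eq_add_single hb ham hj)
  exact ⟨hj.symm, b, hb⟩

theorem exists_mem_uset_le [Finite L] (hs : IsRepetitionAntimatroid (Set.range s)) {m y a b : L}
    (hm : MeetIrred m) (hy : s y = s m + Pi.single i 1) (hb : s b = s a + Pi.single i 1)
    (hi : s a i = s m i) : ∃ x ∈ Uset m, x ≤ a := by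
  obtain ⟨x, hxa, hx⟩ := exists_minimal_le_of_wellFoundedLT
    (fun z => ∃ y, z ⋖ y ∧ MsetDiff z y = {m}) a
    ⟨b, covBy_of_map_eq_add_single hb, hs.msetDiff_eq_singleton hm hy hb hi⟩
  exact ⟨x, hx, hxa⟩

theorem apply_le_of_mem_lset [Finite L] [OrderBot L] (hs : IsRepetitionAntimatroid (Set.range s))
    {m y a : L} (hm : MeetIrred m) (hy : s y = s m + Pi.single i 1) (ha : a ∈ Lset m) :
    s a i ≤ s m i := by
  by_contra! hlt
  obtain ⟨b, hba, hi, c, hc⟩ := hs.exists_le_apply_eq_of_apply_lt hlt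
  obtain ⟨x, hx, hxb⟩ := hs.exists_mem_uset_le hm hy hc hi
  exact not_le_of_mem_lset_of_mem_uset ha hx (hxb.trans hba)

theorem not_exists_map_eq_of_mem_lset [Finite L] (hs : IsRepetitionAntimatroid (Set.range s))
    {m y a : L} (hm : MeetIrred m) (hy : s y = s m + Pi.single i 1) (ha : a ∈ Lset m)
    (hi : s a i = s m i) : ¬ ∃ b, s b = s a + Pi.single i 1 := by
  rintro ⟨b, hb⟩
  obtain ⟨x, hx, hxa⟩ := hs.exists_mem_uset_le hm hy hb hi
  exact not_le_of_mem_lset_of_mem_uset ha hx hxa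

theorem exists_mnotAbove_eq_insert [Finite L] (hs : IsRepetitionAntimatroid (Set.range s))
    {a b : L} (hb : s b = s a + Pi.single i 1) :
    ∃ m y, MeetIrred m ∧ s y = s m + Pi.single i 1 ∧ m ∉ MnotAbove a ∧
      MnotAbove b = insert m (MnotAbove a) := by
  obtain ⟨m, hm, hy, hi⟩ := hs.exists_meetIrred_apply_eq hb
  have hdiff : ∀ x, MeetIrred x ∧ a ≤ x ∧ ¬ b ≤ x ↔ x = m :=
    Set.ext_iff.1 (hs.msetDiff_eq_singleton hm hy hb hi)
  refine ⟨m, _, hm, hy, fun h => h.2 ((hdiff m).2 rfl).2.1, Set.ext fun x => ?_⟩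
  have hab : b ≤ x → a ≤ x := (covBy_of_map_eq_add_single hb).le.trans
  simp only [MnotAbove, Set.mem_ofPred_eq, Set.mem_insert_iff, ← hdiff x]
  tauto

variable [Fintype ι] [Finite L] [OrderBot L]

theorem exists_finsum_mnotAbove_eq_dotProduct (hs : IsRepetitionAntimatroid (Set.range s))
    (r : ι → ℕ) : ∃ e : L → ℕ, ∀ a, ∑ᶠ x ∈ MnotAbove a, e x = s a ⬝ᵥ r := by
  have hlabel (m : L) : ∃ n, ∀ i y, MeetIrred m → s y = s m + Pi.single i 1 → n = r i := by
    by_cases h : ∃ i y, MeetIrred m ∧ s y = s m + Pi.single i 1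
    · obtain ⟨i, y, hm, hy⟩ := h
      exact ⟨r i, fun j z _ hz => congrArg r (hm.index_unique hy hz)⟩
    · exact ⟨0, fun i y hm hy => absurd ⟨i, y, hm, hy⟩ h⟩
  choose e he using hlabel
  refine ⟨e, fun b => ?_⟩
  induction b using WellFoundedLT.induction with
  | ind b ih =>
    by_cases hmin : IsMin b
    · obtain rfl := hmin.eq_bot
      simp [MnotAbove, hs.map_bot]
    · obtain ⟨a, hab⟩ := exists_covBy_of_wellFoundedGT hmin
      obtain ⟨i, hb⟩ := hs.exists_map_eq_add_single_of_covBy hab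
      obtain ⟨m, y, hm, hy, hnot, hins⟩ := hs.exists_mnotAbove_eq_insert hb
      rw [hins, finsum_mem_insert _ hnot (Set.toFinite _), ih a hab.lt, he m i y hm hy, hb,
        add_dotProduct, single_dotProduct, one_mul, add_comm]

/- The weights are `r`, with a large constant `N` added at `i`: this makes the weight of an element
decide first how often `i` occurs and then, among the elements where it occurs as often as in `m`,
whether `r` reaches the threshold. -/
theorem hasSolE_of_threshold (hs : IsRepetitionAntimatroid (Set.range s)) {m y : L}
    (hm : MeetIrred m) (hy : s y = s m + Pi.single i 1) {r : ι → ℕ} {t : ℕ}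
    (hr : ∀ a, s a i = s m i → ((∃ b, s b = s a + Pi.single i 1) ↔ t ≤ s a ⬝ᵥ r)) :
    HasSolE m := by
  by_cases hbot : Uset m = {(⊥ : L)}
  · exact ⟨1, 0, fun _ => le_rfl, fun h => absurd hbot h⟩
  obtain ⟨N, hN⟩ : ∃ N, ∀ a, s a ⬝ᵥ r < N := by
    obtain ⟨M, hM⟩ := (Set.finite_range fun a => s a ⬝ᵥ r).bddAbove
    exact ⟨M + 1, fun a => Nat.lt_succ_of_le (hM ⟨a, rfl⟩)⟩
  obtain ⟨e, he⟩ := hs.exists_finsum_mnotAbove_eq_dotProduct (r + Pi.single i N)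
  have hweight (a : L) : ∑ᶠ x ∈ MnotAbove a, e x = s a ⬝ᵥ r + s a i * N := by
    rw [he, dotProduct_add, dotProduct_single]
  refine ⟨t + s m i * N, e, fun h => absurd h hbot, fun _ => ⟨fun a ha => ?_, fun a ha => ?_⟩⟩
  · rw [hweight]
    rcases (hs.apply_le_of_mem_lset hm hy ha).lt_or_eq with hlt | heq
    · calc s a ⬝ᵥ r + s a i * N < N + s a i * N := by gcongr; exact hN a
        _ = (s a i + 1) * N := by ring
        _ ≤ s m i * N := by gcongr; exact hlt
        _ ≤ t + s m i * N := Nat.le_add_left _ _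
    · rw [heq]
      gcongr
      exact lt_of_not_ge (mt (hr a heq).2 (hs.not_exists_map_eq_of_mem_lset hm hy ha heq))
  · obtain ⟨heq, hb⟩ := hs.apply_eq_and_exists_map_eq_of_mem_uset hm hy ha
    rw [hweight, heq]
    gcongr
    exact (hr a heq).1 hb

end IsRepetitionAntimatroid

section ChipFiring

variable {V : Type*} {E : V → V → ℕ} {c O : V → ℕ} {l l₁ l₂ : List V} {u v : V}

theorem validSeq_append :
    ValidSeq E c (l₁ ++ l₂) ↔ ValidSeq E c l₁ ∧ ValidSeq E (fireList E c l₁) l₂ := by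
  induction l₁ generalizing c with
  | nil => simp only [List.nil_append, ValidSeq, fireList, true_and]
  | cons v l ih => simp only [List.cons_append, ValidSeq, fireList, ih, and_assoc]

theorem validSeq_concat :
    ValidSeq E c (l ++ [v]) ↔ ValidSeq E c l ∧ Firable E (fireList E c l) v := by
  simp only [validSeq_append, ValidSeq, and_true]

theorem fireList_append : fireList E c (l₁ ++ l₂) = fireList E (fireList E c l₁) l₂ := by
  induction l₁ generalizing c with
  | nil => rfl
  | cons _ _ ih => exact ih

/-- The shot vector of a firing sequence: how often it fires each vertex. -/
noncomputable def shotVector (l : List V) : V → ℕ := fun v => l.count v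

theorem shotVector_nil : shotVector ([] : List V) = 0 := rfl

theorem shotVector_append (l₁ l₂ : List V) :
    shotVector (l₁ ++ l₂) = shotVector l₁ + shotVector l₂ :=
  funext fun _ => List.count_append

theorem shotVector_singleton (v : V) : shotVector [v] = Pi.single v 1 := by
  ext u
  obtain rfl | huv := eq_or_ne u v
  · simp [shotVector]
  · simp [shotVector, huv, huv.symm]

theorem eq_singleton_of_shotVector_eq (h : shotVector l = Pi.single v 1) : l = [v] := by
  rw [← shotVector_singleton] at h
  exact List.perm_singleton.1 (List.perm_iff_count.2 (congrFun h))

theorem shotVector_cons (v : V) (l : List V) :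
    shotVector (v :: l) = Pi.single v 1 + shotVector l := by
  rw [← List.singleton_append, shotVector_append, shotVector_singleton]

theorem fire_add_single_mul (h : Firable E c v) (u : V) :
    fire E c v u + (Pi.single v 1 : V → ℕ) u * outDeg E u = c u + E v u := by
  have hchips := h.2
  obtain rfl | huv := eq_or_ne u v
  · simp only [fire, if_true, Pi.single_eq_same, one_mul]
    omega
  · simp only [fire, if_neg huv, Pi.single_eq_of_ne huv, zero_mul, add_zero]

theorem ValidSeq.fireList_add_shotVector_mul [Fintype V] (hl : ValidSeq E c l) (u : V) :
    fireList E c l u + shotVector l u * outDeg E u = c u + shotVector l ⬝ᵥ (E · u) := by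
  induction l generalizing c with
  | nil => simp [fireList, shotVector_nil]
  | cons v l ih =>
    have hfire := fire_add_single_mul hl.1 u
    have hrest := ih hl.2
    rw [shotVector_cons, add_dotProduct, single_dotProduct, Pi.add_apply, add_mul, fireList]
    omega

theorem ValidSeq.firable_fireList_iff [Fintype V] (hl : ValidSeq E c l) :
    Firable E (fireList E c l) v ↔
      ¬ IsSink E v ∧ (shotVector l v + 1) * outDeg E v ≤ c v + shotVector l ⬝ᵥ (E · v) := by
  rw [Firable, ← hl.fireList_add_shotVector_mul v, add_mul, one_mul, add_comm,
    Nat.add_le_add_iff_right]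

variable [Finite V]

theorem ValidSeq.fireList_eq_of_shotVector_eq (h₁ : ValidSeq E c l₁) (h₂ : ValidSeq E c l₂)
    (h : shotVector l₁ = shotVector l₂) : fireList E c l₁ = fireList E c l₂ := by
  cases nonempty_fintype V
  ext u
  have hchips := h₁.fireList_add_shotVector_mul u
  rw [h, ← h₂.fireList_add_shotVector_mul u] at hchips
  exact Nat.add_right_cancel hchips

theorem ValidSeq.firable_of_shotVector_le (h₁ : ValidSeq E c l₁) (h₂ : ValidSeq E c l₂)
    (hle : shotVector l₁ ≤ shotVector l₂) (hv : shotVector l₂ v = shotVector l₁ v)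
    (hf : Firable E (fireList E c l₁) v) : Firable E (fireList E c l₂) v := by
  cases nonempty_fintype V
  rw [h₁.firable_fireList_iff] at hf
  rw [h₂.firable_fireList_iff, hv]
  refine ⟨hf.1, hf.2.trans ?_⟩
  gcongr
  exact dotProduct_le_dotProduct_of_nonneg_right hle fun _ => Nat.zero_le _

theorem ValidSeq.exists_append_sup (h₁ : ValidSeq E c l₁) (h₂ : ValidSeq E c l₂) :
    ∃ l, ValidSeq E c (l₁ ++ l) ∧ shotVector (l₁ ++ l) = shotVector l₁ ⊔ shotVector l₂ := by
  induction l₂ using List.reverseRecOn with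
  | nil => exact ⟨[], by simpa using h₁, by simp [shotVector_nil]⟩
  | append_singleton l₂ v ih =>
    obtain ⟨h₂, hfire⟩ := validSeq_concat.1 h₂
    obtain ⟨l, hl, hsup⟩ := ih h₂
    have hle : shotVector l₂ ≤ shotVector (l₁ ++ l) := hsup ▸ le_sup_right
    have hassoc : shotVector l₁ ⊔ shotVector (l₂ ++ [v]) =
        shotVector (l₁ ++ l) ⊔ (shotVector l₂ + Pi.single v 1) := by
      rw [hsup, sup_assoc, shotVector_append, shotVector_singleton,
        sup_eq_right.2 (le_add_of_nonneg_right (zero_le : 0 ≤ Pi.single v 1))]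
    rw [hassoc]
    rcases (hle v).lt_or_eq with hlt | heq
    · exact ⟨l, hl, (sup_eq_left.2 ((add_single_one_le_iff hle).2 hlt)).symm⟩
    · refine ⟨l ++ [v], ?_, ?_⟩ <;> rw [← List.append_assoc]
      · exact validSeq_concat.2 ⟨hl, h₂.firable_of_shotVector_le hl hle heq.symm hfire⟩
      · rw [sup_add_single_one hle heq.symm, shotVector_append, shotVector_singleton]

theorem ValidSeq.shotVector_le_of_fixedPt (h₁ : ValidSeq E c l₁) (h₂ : ValidSeq E c l₂)
    (hfix : FixedPt E (fireList E c l₂)) : shotVector l₁ ≤ shotVector l₂ := by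
  obtain ⟨l, hl, hsup⟩ := h₂.exists_append_sup h₁
  cases l with
  | nil =>
    rw [List.append_nil] at hsup
    exact hsup ▸ le_sup_right
  | cons v l => exact absurd (validSeq_append.1 hl).2.1 (hfix v)

theorem ReachesUFP.shotVector_eq (h : ReachesUFP E O) (h₁ : ValidSeq E O l₁)
    (h₂ : ValidSeq E O l₂) (heq : fireList E O l₁ = fireList E O l₂) :
    shotVector l₁ = shotVector l₂ := by
  obtain ⟨fp, -, hfix, hreach⟩ := h
  obtain ⟨l, hl, rfl⟩ := hreach _ ⟨l₁, h₁, rfl⟩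
  have h₁l : ValidSeq E O (l₁ ++ l) := validSeq_append.2 ⟨h₁, hl⟩
  have h₂l : ValidSeq E O (l₂ ++ l) := validSeq_append.2 ⟨h₂, heq ▸ hl⟩
  have hfix₁ : FixedPt E (fireList E O (l₁ ++ l)) := fireList_append ▸ hfix
  have hfix₂ : FixedPt E (fireList E O (l₂ ++ l)) := by rwa [fireList_append, ← heq]
  have htotal := le_antisymm (h₁l.shotVector_le_of_fixedPt h₂l hfix₂)
    (h₂l.shotVector_le_of_fixedPt h₁l hfix₁)
  rw [shotVector_append, shotVector_append] at htotal
  exact add_right_cancel htotal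

theorem ReachesUFP.reaches_iff_shotVector_le (h : ReachesUFP E O) (h₁ : ValidSeq E O l₁)
    (h₂ : ValidSeq E O l₂) :
    Reaches E (fireList E O l₁) (fireList E O l₂) ↔ shotVector l₁ ≤ shotVector l₂ := by
  constructor
  · rintro ⟨l, hl, heq⟩
    rw [← fireList_append] at heq
    rw [← h.shotVector_eq (validSeq_append.2 ⟨h₁, hl⟩) h₂ heq, shotVector_append]
    exact le_add_of_nonneg_right zero_le
  · intro hle
    obtain ⟨l, hl, hsup⟩ := h₁.exists_append_sup h₂
    rw [sup_eq_right.2 hle] at hsup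
    exact ⟨l, (validSeq_append.1 hl).2,
      fireList_append.symm.trans (hl.fireList_eq_of_shotVector_eq h₂ hsup)⟩

end ChipFiring

section ShotVectors

variable {V : Type*} {E : V → V → ℕ} {O : V → ℕ}

/-- The shot vectors of the chip firing game `CFG(G,O)`, that is, of its valid firing sequences. -/
def shotVectors (E : V → V → ℕ) (O : V → ℕ) : Set (V → ℕ) :=
  {n | ∃ l, ValidSeq E O l ∧ shotVector l = n}

theorem isRepetitionAntimatroid_shotVectors [Finite V] (E : V → V → ℕ) (O : V → ℕ) :
    IsRepetitionAntimatroid (shotVectors E O) where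
  zero_mem := ⟨[], trivial, rfl⟩
  supClosed := by
    rintro _ ⟨l₁, h₁, rfl⟩ _ ⟨l₂, h₂, rfl⟩
    obtain ⟨l, hl, hsup⟩ := h₁.exists_append_sup h₂
    exact ⟨l₁ ++ l, hl, hsup⟩
  exists_add_single_le := by
    rintro _ ⟨l₁, h₁, rfl⟩ _ ⟨l₂, h₂, rfl⟩ hlt
    obtain ⟨l, hl, hsup⟩ := h₁.exists_append_sup h₂
    rw [sup_eq_right.2 hlt.le, shotVector_append] at hsup
    cases l with
    | nil => exact absurd hsup hlt.ne
    | cons v l =>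
      refine ⟨v, ⟨l₁ ++ [v], ?_, ?_⟩, ?_⟩
      · exact validSeq_concat.2 ⟨h₁, (validSeq_append.1 hl).2.1⟩
      · rw [shotVector_append, shotVector_singleton]
      · rw [← hsup, shotVector_cons, ← add_assoc]
        exact le_add_of_nonneg_right zero_le

theorem add_single_mem_shotVectors_iff [Fintype V] {n : V → ℕ} (hn : n ∈ shotVectors E O) {v : V} :
    n + Pi.single v 1 ∈ shotVectors E O ↔
      ¬ IsSink E v ∧ (n v + 1) * outDeg E v ≤ O v + n ⬝ᵥ (E · v) := by
  obtain ⟨l, hl, rfl⟩ := hn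
  rw [← hl.firable_fireList_iff]
  constructor
  · rintro ⟨l', hl', hshot⟩
    obtain ⟨t, ht, hsup⟩ := hl.exists_append_sup hl'
    rw [hshot, sup_eq_right.2 (le_add_of_nonneg_right zero_le), shotVector_append] at hsup
    obtain rfl := eq_singleton_of_shotVector_eq (add_left_cancel hsup)
    exact (validSeq_concat.1 ht).2
  · intro hv
    exact ⟨l ++ [v], validSeq_concat.2 ⟨hl, hv⟩, by rw [shotVector_append, shotVector_singleton]⟩

theorem Generates.exists_range_eq_shotVectors [Finite V] {L : Type*} [PartialOrder L]
    (hL : Generates E O L) (hu : ReachesUFP E O) :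
    ∃ s : L ↪o (V → ℕ), Set.range s = shotVectors E O := by
  obtain ⟨f, hf⟩ := hL
  choose l hl hfire using fun a => (f a).2
  refine ⟨.ofMapLEIff (fun a => shotVector (l a)) fun a b => ?_, Set.ext fun n => ⟨?_, ?_⟩⟩
  · rw [hf, ← hfire, ← hfire, hu.reaches_iff_shotVector_le (hl a) (hl b)]
  · rintro ⟨a, rfl⟩
    exact ⟨l a, hl a, rfl⟩
  · rintro ⟨l', hl', rfl⟩
    have hfa := congrArg Subtype.val (f.apply_symm_apply ⟨fireList E O l', l', hl', rfl⟩)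
    exact ⟨_, hu.shotVector_eq (hl _) hl' ((hfire _).trans hfa)⟩

theorem Generates.hasSolE [Finite V] {L : Type*} [Lattice L] [OrderBot L] [Finite L]
    (hL : Generates E O L) (hu : ReachesUFP E O) {m : L} (hm : MeetIrred m) : HasSolE m := by
  cases nonempty_fintype V
  obtain ⟨s, hrange⟩ := hL.exists_range_eq_shotVectors hu
  have hs : IsRepetitionAntimatroid (Set.range s) :=
    hrange ▸ isRepetitionAntimatroid_shotVectors E O
  have hstep (a : L) (v : V) : (∃ b, s b = s a + Pi.single v 1) ↔
      ¬ IsSink E v ∧ (s a v + 1) * outDeg E v ≤ O v + s a ⬝ᵥ (E · v) := by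
    rw [← add_single_mem_shotVectors_iff (hrange ▸ ⟨a, rfl⟩), ← hrange, Set.mem_range]
  obtain ⟨y, hmy, -⟩ := id hm
  obtain ⟨v, hy⟩ := hs.exists_map_eq_add_single_of_covBy hmy
  have hsink : ¬ IsSink E v := ((hstep m v).1 ⟨y, hy⟩).1
  refine hs.hasSolE_of_threshold (r := (E · v)) (t := (s m v + 1) * outDeg E v - O v) hm hy
    fun a ha => ?_
  rw [hstep, ha, and_iff_right hsink, tsub_le_iff_left]

end ShotVectors

/-- if a finite ULD lattice `L` is in `L(CFG)` then for every
meet-irreducible `m` of `L` the system `E(m)` has a non-negative integer solution. -/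
theorem stmt3 {L : Type*} [Lattice L] [Fintype L] [BoundedOrder L]
    (hULD : IsULD L) (hL : MemLCFG L) :
    ∀ m : L, MeetIrred m → HasSolE m := by
  intro m hm
  obtain ⟨V, _, E, O, hu, hgen⟩ := hL
  exact hgen.hasSolE hu hm
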